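/- (Structuration of C^ε-trees.) Let val : C^ω → X be a valuation with ε-memory ≤ μ and let T be a C^ε-tree with root t₀. Then there exists an ε-separated well-monotone graph U of breadth ≤ μ and a morphism φ : T → U with val^ε_U(φ(t₀)) ≤ val^ε_T(t₀) (so the value at the root is preserved). Moreover, if val has ε-chromatic memory ≤ μ, then U can be taken chromatic. -/

import Mathlib

universe u v

open Cardinal

/-- A `C`-pregraph on vertex type `V`: a set of coloured directed edges. -/
structure Pregraph (C : Type u) (V : Type u) : Type u where
  Edge : V → C → V → Prop

namespace Pregraph

variable {C V V' : Type u}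

/-- A pregraph is a graph when it has no sinks. -/
def NoSinks (G : Pregraph C V) : Prop :=
  ∀ v : V, ∃ c v', G.Edge v c v'

/-- An infinite path with vertex sequence `π` and colour sequence `γ`. -/
def InfPath (G : Pregraph C V) (π : ℕ → V) (γ : ℕ → C) : Prop :=
  ∀ i, G.Edge (π i) (γ i) (π (i + 1))

/-- A finite path starting at a given vertex, recorded as a list of (colour, target) pairs. -/
def ListPath (G : Pregraph C V) : V → List (C × V) → Prop
  | _, [] => True
  | v, e :: p => G.Edge v e.1 e.2 ∧ G.ListPath e.2 p

/-- Endpoint of a finite path. -/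
def pathEnd : V → List (C × V) → V
  | v, [] => v
  | _, e :: p => pathEnd e.2 p

/-- A pretree: every vertex is reached from the root by a unique finite path. -/
def IsPretree (G : Pregraph C V) (t₀ : V) : Prop :=
  ∀ t : V, ∃! p : List (C × V), G.ListPath t₀ p ∧ pathEnd t₀ p = t

/-- A tree: a pretree without sinks. -/
def IsTree (G : Pregraph C V) (t₀ : V) : Prop :=
  G.NoSinks ∧ G.IsPretree t₀

/-- Morphisms of pregraphs. -/
def IsMorphism (G : Pregraph C V) (H : Pregraph C V') (φ : V → V') : Prop :=
  ∀ ⦃v c v'⦄, G.Edge v c v' → H.Edge (φ v) c (φ v')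

/-- The value of a vertex with respect to a valuation: the supremum of the values of
infinite paths from the vertex. -/
noncomputable def valueAt {X : Type v} [CompleteLinearOrder X]
    (G : Pregraph C V) (val : (ℕ → C) → X) (v : V) : X :=
  sSup {x | ∃ π γ, π 0 = v ∧ G.InfPath π γ ∧ val γ = x}

/-- A vertex satisfies an objective `W` if every infinite path from it has colour
sequence in `W`. -/
def VertexSat (G : Pregraph C V) (W : Set (ℕ → C)) (v : V) : Prop :=
  ∀ π γ, π 0 = v → G.InfPath π γ → γ ∈ W

/-- A pregraph satisfies an objective if all its vertices do. -/
def Sat (G : Pregraph C V) (W : Set (ℕ → C)) : Prop :=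
  ∀ v, G.VertexSat W v

/-- Monotonicity of a pregraph with respect to an order relation `le`:
`u ≥ v →c v' ≥ u'` implies `u →c u'`. -/
def MonotoneRel (G : Pregraph C V) (le : V → V → Prop) : Prop :=
  ∀ ⦃u v c v' u'⦄, le v u → G.Edge v c v' → le u' v' → G.Edge u c u'

end Pregraph

/-- The strict relation associated to `le`. -/
def strictOf {V : Type u} (le : V → V → Prop) : V → V → Prop :=
  fun a b => le a b ∧ a ≠ b

/-- `w' : ℕ → C` is a completion of `w : ℕ → Option C` if the projection of `w`
(deleting all `none`'s, i.e. all ε's) is a prefix of (or equal to) `w'`. -/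
def IsCompletion {C : Type u} (w : ℕ → Option C) (w' : ℕ → C) : Prop :=
  ∀ (k n : ℕ) (h : n < ((List.range k).filterMap w).length),
    ((List.range k).filterMap w).get ⟨n, h⟩ = w' n

/-- The ε-extension of a valuation, where `none` plays the role of ε.
If the projection of `w` is infinite, its unique completion `w'` yields `val w'`;
otherwise this is the infimum of `val` over all completions. -/
noncomputable def epsExtension {C : Type u} {X : Type v} [CompleteLinearOrder X]
    (val : (ℕ → C) → X) : (ℕ → Option C) → X :=
  fun w => sInf {x | ∃ w', IsCompletion w w' ∧ val w' = x}

/-- The ε-extension of an objective. -/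
def epsObjective {C : Type u} (W : Set (ℕ → C)) : Set (ℕ → Option C) :=
  {w | ∃ w', IsCompletion w w' ∧ w' ∈ W}

/-- Strategies: `S` is a graph, `πS` a morphism sending `s₀` to `v₀`, and every Adam move
can be simulated from every state above the corresponding vertex. -/
def IsStrategy {C V VS : Type u} (G : Pregraph C V) (VEve : Set V) (v₀ : V)
    (S : Pregraph C VS) (πS : VS → V) (s₀ : VS) : Prop :=
  S.NoSinks ∧ S.IsMorphism G πS ∧ πS s₀ = v₀ ∧
    ∀ v, v ∉ VEve → ∀ c v', G.Edge v c v' →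
      ∀ s, πS s = v → ∃ s', πS s' = v' ∧ S.Edge s c s'

/-- The value of a game: the infimum of the values of its strategies. -/
noncomputable def gameValue {C V : Type u} {X : Type v} [CompleteLinearOrder X]
    (G : Pregraph C V) (VEve : Set V) (v₀ : V) (val : (ℕ → C) → X) : X :=
  sInf {x | ∃ (VS : Type u) (S : Pregraph C VS) (πS : VS → V) (s₀ : VS),
    IsStrategy G VEve v₀ S πS s₀ ∧ S.valueAt val s₀ = x}

/-- An ε-strategy: a product strategy over `M` (vertices form a subset `D ⊆ V × M`,
projection is the first component) whose ε-edges do not update the memory. -/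
def IsEpsStrategy {C V M : Type u} (G : Pregraph (Option C) V) (VEve : Set V) (v₀ : V)
    (D : Set (V × M)) (S : Pregraph (Option C) ↥D) (s₀ : ↥D) : Prop :=
  IsStrategy G VEve v₀ S (fun s => (s : V × M).1) s₀ ∧
    ∀ s s' : ↥D, S.Edge s none s' → (s : V × M).2 = (s' : V × M).2

/-- A product strategy is chromatic if memory updates only depend on the current memory
state and the colour read. -/
def IsChromaticStrat {C V M : Type u} (D : Set (V × M)) (S : Pregraph C ↥D) : Prop :=
  ∃ δ : M → C → M, ∀ (s s' : ↥D) (c : C), S.Edge s c s' → (s' : V × M).2 = δ (s : V × M).2 c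

/-- ε-separated monotone graph over `M` (with `part` the partition into fibres):
`v ≤ v' ↔ v' →ε v` is a partial order making the graph monotone, ε-edges stay inside
fibres, and each fibre is totally ordered. -/
structure IsEpsSeparated {C V M : Type u} (U : Pregraph (Option C) V) (part : V → M) : Prop where
  refl : ∀ v, U.Edge v none v
  antisymm : ∀ ⦃v v'⦄, U.Edge v none v' → U.Edge v' none v → v = v'
  mono : ∀ ⦃u v c v' u'⦄, U.Edge u none v → U.Edge v c v' → U.Edge v' none u' → U.Edge u c u'
  sameFiber : ∀ ⦃v v'⦄, U.Edge v none v' → part v = part v'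
  total : ∀ ⦃v v'⦄, part v = part v' → U.Edge v none v' ∨ U.Edge v' none v

/-- Well-foundedness of the order `v ≤ v' ↔ v' →ε v` of an ε-separated graph. -/
def EpsWellFounded {C V : Type u} (U : Pregraph (Option C) V) : Prop :=
  WellFounded (fun v v' => U.Edge v' none v ∧ v ≠ v')

/-- A chromatic ε-separated graph: colours act uniformly on the parts. -/
def IsChromaticGraph {C V M : Type u} (U : Pregraph (Option C) V) (part : V → M) : Prop :=
  ∃ δ : M → C → M, ∀ ⦃v c v'⦄, U.Edge v (some c) v' → part v' = δ (part v) c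

/-- `(κ, val)`-universality for a valuation: every tree of cardinality `< κ` maps into `U`
by a morphism preserving the value at the root. -/
def IsUniversal {C VU : Type u} {X : Type v} [CompleteLinearOrder X]
    (κ : Cardinal.{u}) (val : (ℕ → C) → X) (U : Pregraph C VU) : Prop :=
  ∀ (VT : Type u) (T : Pregraph C VT) (t₀ : VT), T.IsTree t₀ → #VT < κ →
    ∃ φ : VT → VU, T.IsMorphism U φ ∧ U.valueAt val (φ t₀) ≤ T.valueAt val t₀

/-- A valuation has ε-memory ≤ μ: in every ε-game, the value is attained by an ε-strategy
of memory ≤ μ. -/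
def HasEpsMemLE {C : Type u} {X : Type v} [CompleteLinearOrder X]
    (val : (ℕ → C) → X) (μ : Cardinal.{u}) : Prop :=
  ∀ (V : Type u) (G : Pregraph (Option C) V), G.NoSinks → ∀ (VEve : Set V) (v₀ : V),
    ∃ (M : Type u) (D : Set (V × M)) (S : Pregraph (Option C) ↥D) (s₀ : ↥D),
      #M ≤ μ ∧ IsEpsStrategy G VEve v₀ D S s₀ ∧
      S.valueAt (epsExtension val) s₀ ≤ gameValue G VEve v₀ (epsExtension val)

/-- A valuation has ε-chromatic memory ≤ μ: in every ε-game, the value is attained by an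
ε-chromatic strategy of memory ≤ μ. -/
def HasEpsChromMemLE {C : Type u} {X : Type v} [CompleteLinearOrder X]
    (val : (ℕ → C) → X) (μ : Cardinal.{u}) : Prop :=
  ∀ (V : Type u) (G : Pregraph (Option C) V), G.NoSinks → ∀ (VEve : Set V) (v₀ : V),
    ∃ (M : Type u) (D : Set (V × M)) (S : Pregraph (Option C) ↥D) (s₀ : ↥D),
      #M ≤ μ ∧ IsEpsStrategy G VEve v₀ D S s₀ ∧ IsChromaticStrat D S ∧
      S.valueAt (epsExtension val) s₀ ≤ gameValue G VEve v₀ (epsExtension val)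

/-!
In the *choice game* on `T`, Adam walks along `T` and may at any time, by an ε-move, challenge Eve
with a set `A` containing the current vertex; Eve answers by an ε-move to an element of `A`.
Returning to where Adam came from only inserts ε's in a path of `T`, so the game has value at most
that of `T`. In an ε-strategy, all challenges of `A` with memory `m` lead to the same state
`(A, m)`, whose answer is therefore an ε-least element of `A × {m}` for ε-reachability: the
ε-saturation of the strategy prewellorders the states with memory `m`. Quotienting by
ε-equivalence gives `U`, and neither saturating nor quotienting increases the value.
-/

namespace Pregraph

variable {C V V' : Type u} {G : Pregraph C V}

section Paths

@[simp]
theorem pathEnd_append (v : V) (p q : List (C × V)) :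
    pathEnd v (p ++ q) = pathEnd (pathEnd v p) q := by
  induction p generalizing v with
  | nil => rfl
  | cons e _ ih => exact ih e.2

@[simp]
theorem listPath_append {v : V} {p q : List (C × V)} :
    G.ListPath v (p ++ q) ↔ G.ListPath v p ∧ G.ListPath (pathEnd v p) q := by
  induction p generalizing v with
  | nil => simp [ListPath, pathEnd]
  | cons e _ ih => simp [ListPath, pathEnd, ih, and_assoc]

@[simp]
theorem listPath_singleton {v : V} {e : C × V} : G.ListPath v [e] ↔ G.Edge v e.1 e.2 :=
  and_iff_left trivial

theorem exists_listPath_concat_of_isChain (hG : G.NoSinks) {v : V} {P : Set (List (C × V))}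
    (hchain : IsChain (· <+: ·) P) (hP : ∀ p ∈ P, G.ListPath v p) {p : List (C × V)}
    (hp : G.ListPath v p) (hcomp : ∀ q ∈ P, p <+: q ∨ q <+: p) :
    ∃ e, G.ListPath v (p ++ [e]) ∧ ∀ q ∈ P, p ++ [e] <+: q ∨ q <+: p ++ [e] := by
  by_cases hlong : ∃ e, ∃ q ∈ P, p ++ [e] <+: q
  · obtain ⟨e, q, hq, hpq⟩ := hlong
    refine ⟨e, ?_, fun q' hq' => ?_⟩
    · obtain ⟨r, rfl⟩ := hpq
      exact (listPath_append.1 (hP _ hq)).1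
    · rcases hchain.total hq hq' with h | h
      · exact .inl (hpq.trans h)
      · exact List.prefix_or_prefix_of_prefix hpq h
  · obtain ⟨c, v', he⟩ := hG (pathEnd v p)
    refine ⟨(c, v'), by simp [hp, he], fun q hq => .inr ?_⟩
    rcases hcomp q hq with ⟨_ | ⟨e, r⟩, rfl⟩ | h
    · simp
    · exact absurd ⟨e, _, hq, r, by simp⟩ hlong
    · exact h.trans (List.prefix_append _ _)

theorem exists_infPath_of_isChain (hG : G.NoSinks) {v : V} {P : Set (List (C × V))}
    (hchain : IsChain (· <+: ·) P) (hP : ∀ p ∈ P, G.ListPath v p) :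
    ∃ π γ, π 0 = v ∧ G.InfPath π γ ∧
      ∀ p ∈ P, ∃ n, p = (List.range n).map fun i => (γ i, π (i + 1)) := by
  let Q := {p // G.ListPath v p ∧ ∀ q ∈ P, p <+: q ∨ q <+: p}
  choose e he hcomp using fun p : Q =>
    exists_listPath_concat_of_isChain hG hchain hP p.2.1 p.2.2
  let start : Q := ⟨[], trivial, fun _ _ => .inl List.nil_prefix⟩
  let path (n : ℕ) : Q := (fun p : Q => ⟨p.1 ++ [e p], he p, hcomp p⟩)^[n] start
  have path_succ (n : ℕ) : (path (n + 1)).1 = (path n).1 ++ [e (path n)] := by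
    simp only [path, Function.iterate_succ_apply']
  have pathEnd_succ (n : ℕ) : pathEnd v (path (n + 1)).1 = (e (path n)).2 := by
    rw [path_succ, pathEnd_append]; rfl
  refine ⟨fun n => pathEnd v (path n).1, fun n => (e (path n)).1, rfl, fun n => ?_, ?_⟩
  · change G.Edge _ _ (pathEnd v (path (n + 1)).1)
    rw [pathEnd_succ]
    exact listPath_singleton.1 (listPath_append.1 (he (path n))).2
  · have path_eq (n : ℕ) : (path n).1 =
        (List.range n).map fun i => ((e (path i)).1, pathEnd v (path (i + 1)).1) := by
      induction n with
      | zero => rfl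
      | succ n ih => rw [path_succ, List.range_succ, List.map_append, ← ih, List.map_singleton,
          pathEnd_succ]
    intro p hp
    refine ⟨p.length, ?_⟩
    have hlen : (path p.length).1.length = p.length := by rw [path_eq]; simp
    rw [← path_eq]
    rcases (path p.length).2.2 p hp with h | h
    · exact (h.eq_of_length hlen).symm
    · exact h.eq_of_length hlen.symm

theorem IsPretree.exists_section {Y : Type u} {T : Pregraph C V} {t₀ : V} (hT : T.IsPretree t₀)
    {S : Pregraph C Y} (proj : Y → V) {s₀ : Y} (h₀ : proj s₀ = t₀)
    (hlift : ∀ s c t', T.Edge (proj s) c t' → ∃ s', proj s' = t' ∧ S.Edge s c s') :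
    ∃ ψ : V → Y, ψ t₀ = s₀ ∧ (∀ t, proj (ψ t) = t) ∧ T.IsMorphism S ψ := by
  have : Nonempty Y := ⟨s₀⟩
  choose! step hproj hedge using hlift
  let lift (p : List (C × V)) : Y := p.foldl (fun s e => step s e.1 e.2) s₀
  have proj_lift (p : List (C × V)) (hp : T.ListPath t₀ p) : proj (lift p) = pathEnd t₀ p := by
    induction p using List.reverseRecOn with
    | nil => exact h₀
    | append_singleton p e ih =>
      rw [listPath_append, listPath_singleton] at hp
      simpa [lift, pathEnd] using hproj _ e.1 e.2 (ih hp.1 ▸ hp.2)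
  choose path hpath huniq using hT
  have proj_path (t : V) : proj (lift (path t)) = t :=
    (proj_lift _ (hpath t).1).trans (hpath t).2
  refine ⟨fun t => lift (path t), ?_, proj_path, fun t c t' he => ?_⟩
  · change lift (path t₀) = s₀
    rw [← huniq t₀ [] ⟨trivial, rfl⟩]
    rfl
  · have hpath' : path t ++ [(c, t')] = path t' := by
      refine huniq t' _ ⟨?_, by rw [pathEnd_append]; rfl⟩
      rw [listPath_append, listPath_singleton, (hpath t).2]
      exact ⟨(hpath t).1, he⟩
    simp only [← hpath', lift, List.foldl_append, List.foldl_cons, List.foldl_nil]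
    exact hedge _ _ _ ((proj_path t).symm ▸ he)

end Paths

section Values

variable {X : Type v} [CompleteLinearOrder X]

theorem IsMorphism.comp {V'' : Type u} {H : Pregraph C V'} {K : Pregraph C V''} {ψ : V' → V''}
    {φ : V → V'} (hψ : H.IsMorphism K ψ) (hφ : G.IsMorphism H φ) : G.IsMorphism K (ψ ∘ φ) :=
  fun _ _ _ h => hψ (hφ h)

theorem IsMorphism.valueAt_le {H : Pregraph C V'} {φ : V → V'} (hφ : G.IsMorphism H φ)
    (val : (ℕ → C) → X) (v : V) : G.valueAt val v ≤ H.valueAt val (φ v) :=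
  sSup_le_sSup fun _ ⟨π, γ, h₀, hπ, hx⟩ => ⟨φ ∘ π, γ, congrArg φ h₀, fun i => hφ (hπ i), hx⟩

theorem valueAt_le_of_edge_imp (val : (ℕ → C) → X) {u v : V}
    (h : ∀ c w, G.Edge v c w → G.Edge u c w) : G.valueAt val v ≤ G.valueAt val u := by
  refine sSup_le_sSup ?_
  rintro _ ⟨π, γ, rfl, hπ, rfl⟩
  refine ⟨Function.update π 0 u, γ, by simp, fun i => ?_, rfl⟩
  rcases i with _ | i
  · simpa using h _ _ (hπ 0)
  · simpa using hπ (i + 1)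

end Values

/-- The graph structure pulled back along a map of vertices. -/
def comap (f : V' → V) (G : Pregraph C V) : Pregraph C V' :=
  ⟨fun v c v' => G.Edge (f v) c (f v')⟩

theorem isMorphism_comap (f : V' → V) (G : Pregraph C V) : (G.comap f).IsMorphism G f :=
  fun _ _ _ h => h

end Pregraph

theorem IsChromaticGraph.comap {C V V' M : Type u} {G : Pregraph (Option C) V} {part : V → M}
    (hG : IsChromaticGraph G part) (f : V' → V) : IsChromaticGraph (G.comap f) (part ∘ f) :=
  let ⟨δ, hδ⟩ := hG
  ⟨δ, fun _ _ _ h => hδ h⟩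

section Saturation

open Relation

variable {C V M : Type u} {G : Pregraph (Option C) V}

theorem IsCompletion.of_forall_exists_filterMap_eq {γ γ' : ℕ → Option C} {w : ℕ → C}
    (h : ∀ k, ∃ n, (List.range k).filterMap γ = (List.range n).filterMap γ')
    (hw : IsCompletion γ' w) : IsCompletion γ w := by
  intro k i hi
  obtain ⟨n, hn⟩ := h k
  rw [← hw n i (hn ▸ hi)]
  simp only [List.get_eq_getElem, hn]

theorem epsExtension_le_of_forall_exists_filterMap_eq {X : Type v} [CompleteLinearOrder X]
    (val : (ℕ → C) → X) {γ γ' : ℕ → Option C}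
    (h : ∀ k, ∃ n, (List.range k).filterMap γ = (List.range n).filterMap γ') :
    epsExtension val γ ≤ epsExtension val γ' :=
  sInf_le_sInf fun _ ⟨w, hw, hx⟩ => ⟨w, hw.of_forall_exists_filterMap_eq h, hx⟩

namespace Pregraph

/-- The ε-saturation of a graph, whose `c`-edges are the finite paths with `C`-projection `c`
(in particular the empty path is an ε-edge). -/
def saturate (G : Pregraph (Option C) V) : Pregraph (Option C) V where
  Edge
    | v, none, v' => ReflTransGen (G.Edge · none ·) v v'
    | v, some c, v' => ∃ a b, ReflTransGen (G.Edge · none ·) v a ∧ G.Edge a (some c) b ∧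
        ReflTransGen (G.Edge · none ·) b v'

theorem isMorphism_saturate (G : Pregraph (Option C) V) : G.IsMorphism G.saturate id
  | _, none, _, h => .single h
  | v, some _, v', h => ⟨v, v', .refl, h, .refl⟩

theorem saturate_edge_mono {u v v' u' : V} {c : Option C} (huv : G.saturate.Edge u none v)
    (h : G.saturate.Edge v c v') (hvu' : G.saturate.Edge v' none u') : G.saturate.Edge u c u' := by
  cases c with
  | none => exact (ReflTransGen.trans huv h).trans hvu'
  | some c =>
    obtain ⟨a, b, hva, hab, hbv'⟩ := h
    exact ⟨a, b, ReflTransGen.trans huv hva, hab, hbv'.trans hvu'⟩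

theorem part_eq_of_saturate_edge_none {part : V → M}
    (hpart : ∀ ⦃v v'⦄, G.Edge v none v' → part v = part v') {v v' : V}
    (h : G.saturate.Edge v none v') : part v = part v' := by
  have hlift : ReflTransGen Eq (part v) (part v') := ReflTransGen.lift part hpart _ _ h
  rwa [reflTransGen_eq_self] at hlift

theorem exists_listPath_of_reflTransGen {v v' : V} (h : ReflTransGen (G.Edge · none ·) v v') :
    ∃ p, G.ListPath v p ∧ pathEnd v p = v' ∧ p.filterMap Prod.fst = [] := by
  induction h with
  | refl => exact ⟨[], trivial, rfl, rfl⟩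
  | @tail a b _ hab ih =>
    obtain ⟨p, hp, rfl, hcol⟩ := ih
    exact ⟨p ++ [(none, b)], by simp [hp, hab], by simp [pathEnd], by simp [hcol]⟩

theorem exists_listPath_of_saturate_edge {v v' : V} {c : Option C} (h : G.saturate.Edge v c v') :
    ∃ p, G.ListPath v p ∧ pathEnd v p = v' ∧ p.filterMap Prod.fst = c.toList := by
  cases c with
  | none => exact exists_listPath_of_reflTransGen h
  | some c =>
    obtain ⟨a, b, hva, hab, hbv'⟩ := h
    obtain ⟨p, hp, rfl, hpcol⟩ := exists_listPath_of_reflTransGen hva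
    obtain ⟨q, hq, rfl, hqcol⟩ := exists_listPath_of_reflTransGen hbv'
    exact ⟨p ++ (some c, b) :: q, by simp [hp, hab, hq, ListPath], by simp [pathEnd],
      by simp [hpcol, hqcol]⟩

theorem InfPath.exists_infPath_of_saturate (hG : G.NoSinks) {π : ℕ → V} {γ : ℕ → Option C}
    (hπ : G.saturate.InfPath π γ) :
    ∃ π' γ', π' 0 = π 0 ∧ G.InfPath π' γ' ∧
      ∀ k, ∃ n, (List.range k).filterMap γ = (List.range n).filterMap γ' := by
  choose p hp hend hcol using fun i => exists_listPath_of_saturate_edge (hπ i)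
  let q (k : ℕ) : List (Option C × V) := (List.range k).flatMap p
  have q_succ (k : ℕ) : q (k + 1) = q k ++ p k := by simp [q, List.range_succ]
  have hq (k : ℕ) : G.ListPath (π 0) (q k) ∧ pathEnd (π 0) (q k) = π k := by
    induction k with
    | zero => exact ⟨trivial, rfl⟩
    | succ k ih => simp [q_succ, ih, hp, hend]
  have hqcol (k : ℕ) : (q k).filterMap Prod.fst = (List.range k).filterMap γ := by
    induction k with
    | zero => rfl
    | succ k ih =>
      rw [q_succ, List.filterMap_append, ih, hcol, List.range_succ, List.filterMap_append]
      cases h : γ k <;> simp [h]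
  have hmono {j k : ℕ} (hjk : j ≤ k) : q j <+: q k := by
    induction hjk with
    | refl => exact List.prefix_rfl
    | step _ ih => exact ih.trans ⟨_, (q_succ _).symm⟩
  have hchain : IsChain (· <+: ·) (Set.range q) := by
    rintro _ ⟨j, rfl⟩ _ ⟨k, rfl⟩ -
    exact (le_total j k).imp hmono hmono
  obtain ⟨π', γ', h₀, hπ', hext⟩ :=
    exists_infPath_of_isChain hG hchain (Set.forall_mem_range.2 fun k => (hq k).1)
  refine ⟨π', γ', h₀, hπ', fun k => ?_⟩
  obtain ⟨n, hn⟩ := hext (q k) ⟨k, rfl⟩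
  exact ⟨n, by rw [← hqcol, hn, List.filterMap_map]; rfl⟩

theorem valueAt_saturate {X : Type v} [CompleteLinearOrder X] (hG : G.NoSinks)
    (val : (ℕ → C) → X) (v : V) :
    G.saturate.valueAt (epsExtension val) v = G.valueAt (epsExtension val) v := by
  refine le_antisymm (sSup_le ?_) (G.isMorphism_saturate.valueAt_le _ v)
  rintro _ ⟨π, γ, rfl, hπ, rfl⟩
  obtain ⟨π', γ', h₀, hπ', hproj⟩ := hπ.exists_infPath_of_saturate hG
  exact (epsExtension_le_of_forall_exists_filterMap_eq val hproj).trans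
    (le_sSup ⟨π', γ', h₀, hπ', rfl⟩)

end Pregraph

theorem IsChromaticGraph.saturate {part : V → M} (hG : IsChromaticGraph G part)
    (hpart : ∀ ⦃v v'⦄, G.Edge v none v' → part v = part v') :
    IsChromaticGraph G.saturate part := by
  obtain ⟨δ, hδ⟩ := hG
  refine ⟨δ, ?_⟩
  rintro v c v' ⟨a, b, hva, hab, hbv'⟩
  rw [Pregraph.part_eq_of_saturate_edge_none hpart hva, ← hδ hab,
    Pregraph.part_eq_of_saturate_edge_none hpart hbv']

end Saturation

/-- An ε-separated well-monotone graph up to antisymmetry: each part is prewellordered, rather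
than well-ordered, by `v ≤ v' ↔ v' →ε v`. -/
structure IsEpsPreseparated {C V M : Type u} (G : Pregraph (Option C) V) (part : V → M) :
    Prop where
  mono : ∀ ⦃u v c v' u'⦄, G.Edge u none v → G.Edge v c v' → G.Edge v' none u' → G.Edge u c u'
  sameFiber : ∀ ⦃v v'⦄, G.Edge v none v' → part v = part v'
  exists_least : ∀ ⦃m⦄ ⦃A : Set V⦄, A.Nonempty → (∀ v ∈ A, part v = m) →
    ∃ v ∈ A, ∀ v' ∈ A, G.Edge v' none v

namespace IsEpsPreseparated

variable {C V V' M : Type u} {G : Pregraph (Option C) V} {part : V → M}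

theorem total (hG : IsEpsPreseparated G part) {v v' : V} (h : part v = part v') :
    G.Edge v none v' ∨ G.Edge v' none v := by
  obtain ⟨u, rfl | rfl, hleast⟩ :=
    hG.exists_least (A := {v, v'}) (m := part v') ⟨v, by simp⟩ (by simp [h])
  · exact .inr (hleast _ (by simp))
  · exact .inl (hleast _ (by simp))

theorem refl (hG : IsEpsPreseparated G part) (v : V) : G.Edge v none v :=
  or_self_iff.1 (hG.total rfl)

theorem comap (hG : IsEpsPreseparated G part) (f : V' → V) :
    IsEpsPreseparated (G.comap f) (part ∘ f) where
  mono _ _ _ _ _ := @hG.mono _ _ _ _ _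
  sameFiber _ _ h := hG.sameFiber h
  exists_least m A hA hpart := by
    obtain ⟨_, ⟨v, hv, rfl⟩, hleast⟩ :=
      hG.exists_least (hA.image f) (Set.forall_mem_image.2 hpart)
    exact ⟨v, hv, fun v' hv' => hleast _ (Set.mem_image_of_mem f hv')⟩

theorem isEpsSeparated (hG : IsEpsPreseparated G part)
    (antisymm : ∀ ⦃v v'⦄, G.Edge v none v' → G.Edge v' none v → v = v') :
    IsEpsSeparated G part where
  refl := hG.refl
  antisymm := antisymm
  mono := hG.mono
  sameFiber := hG.sameFiber
  total _ _ := hG.total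

theorem epsWellFounded (hG : IsEpsPreseparated G part)
    (antisymm : ∀ ⦃v v'⦄, G.Edge v none v' → G.Edge v' none v → v = v') : EpsWellFounded G := by
  refine WellFounded.wellFounded_iff_has_min.2 fun A ⟨a, ha⟩ => ?_
  obtain ⟨v, ⟨hvA, hva⟩, hleast⟩ :=
    hG.exists_least (A := {v ∈ A | part v = part a}) ⟨a, ha, rfl⟩ fun _ h => h.2
  refine ⟨v, hvA, fun u hu ⟨hvu, hne⟩ => hne (antisymm (hleast u ⟨hu, ?_⟩) hvu)⟩
  exact (hG.sameFiber hvu).symm.trans hva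

/-- Mutual reachability by ε-edges. -/
def epsSetoid (hG : IsEpsPreseparated G part) : Setoid V where
  r v v' := G.Edge v none v' ∧ G.Edge v' none v
  iseqv :=
    { refl := fun v => ⟨hG.refl v, hG.refl v⟩
      symm := And.symm
      trans := fun h h' =>
        ⟨hG.mono h.1 h'.1 (hG.refl _), hG.mono h'.2 h.2 (hG.refl _)⟩ }

/-- The quotient of `G` by ε-equivalence. Edges are read off representatives; by monotonicity
their choice is irrelevant. -/
noncomputable def collapse (hG : IsEpsPreseparated G part) :
    Pregraph (Option C) (Quotient hG.epsSetoid) :=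
  G.comap Quotient.out

theorem collapse_antisymm (hG : IsEpsPreseparated G part) ⦃q q' : Quotient hG.epsSetoid⦄
    (h : hG.collapse.Edge q none q') (h' : hG.collapse.Edge q' none q) : q = q' :=
  Quotient.out_equiv_out.1 ⟨h, h'⟩

theorem isMorphism_mk (hG : IsEpsPreseparated G part) :
    G.IsMorphism hG.collapse (Quotient.mk hG.epsSetoid) :=
  fun v _ v' h => hG.mono (Quotient.mk_out (s := hG.epsSetoid) v).1 h
    (Quotient.mk_out (s := hG.epsSetoid) v').2

theorem valueAt_collapse_mk_le {X : Type v} [CompleteLinearOrder X]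
    (hG : IsEpsPreseparated G part) (val : (ℕ → Option C) → X) (v : V) :
    hG.collapse.valueAt val (Quotient.mk _ v) ≤ G.valueAt val v :=
  ((G.isMorphism_comap Quotient.out).valueAt_le val _).trans <|
    G.valueAt_le_of_edge_imp val fun _ _ h =>
      hG.mono (Quotient.mk_out (s := hG.epsSetoid) v).2 h (hG.refl _)

end IsEpsPreseparated

section ChoiceGame

variable {C V : Type u}

/-- Nonempty sets of vertices, the challenges of Adam in the choice game. -/
abbrev Challenge (V : Type u) : Type u := {A : Set V // A.Nonempty}

/-- Edges of the choice game on `T`: Adam moves along `T` or challenges Eve with a set containing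
the current vertex, and Eve answers with an element of this set. -/
inductive ChoiceEdge (T : Pregraph (Option C) V) :
    V ⊕ Challenge V → Option C → V ⊕ Challenge V → Prop
  | walk {t c t'} : T.Edge t c t' → ChoiceEdge T (.inl t) c (.inl t')
  | challenge {t} {A : Challenge V} : t ∈ A.1 → ChoiceEdge T (.inl t) none (.inr A)
  | answer {t} {A : Challenge V} : t ∈ A.1 → ChoiceEdge T (.inr A) none (.inl t)

/-- The arena of the choice game on `T`. -/
def choiceGame (T : Pregraph (Option C) V) : Pregraph (Option C) (V ⊕ Challenge V) :=
  ⟨ChoiceEdge T⟩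

/-- Eve owns the challenges. -/
def choiceEve (V : Type u) : Set (V ⊕ Challenge V) := Set.range Sum.inr

variable {T : Pregraph (Option C) V} {t₀ : V}

theorem inl_notMem_choiceEve (t : V) : Sum.inl t ∉ choiceEve V := by simp [choiceEve]

theorem choiceGame_noSinks (hT : T.NoSinks) : (choiceGame T).NoSinks
  | .inl t => let ⟨c, t', h⟩ := hT t; ⟨c, .inl t', .walk h⟩
  | .inr A => let ⟨t, ht⟩ := A.2; ⟨none, .inl t, .answer ht⟩

/-- The vertices of the tree at which Adam may stand in a given position: when he challenges Eve
with `A`, he stays at an element of `A`. -/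
def standing : V ⊕ Challenge V → Set V
  | .inl t => {t}
  | .inr A => A.1

/-- Strategy of Eve in the choice game which answers each challenge by the vertex where Adam
stands, kept as the second component of states. -/
def returnStrategy (T : Pregraph (Option C) V) :
    Pregraph (Option C) {s : (V ⊕ Challenge V) × V // s.2 ∈ standing s.1} :=
  ⟨fun s c s' => (choiceGame T).Edge s.1.1 c s'.1.1 ∧ T.saturate.Edge s.1.2 c s'.1.2⟩

theorem isStrategy_returnStrategy (hT : T.NoSinks) (t₀ : V) :
    IsStrategy (choiceGame T) (choiceEve V) (.inl t₀) (returnStrategy T) (fun s => s.1.1)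
      ⟨(.inl t₀, t₀), rfl⟩ := by
  refine ⟨?_, fun _ _ _ h => h.1, rfl, ?_⟩
  · rintro ⟨⟨t | A, t'⟩, ht⟩
    · obtain ⟨c, u, h⟩ := hT t
      obtain rfl : t' = t := ht
      exact ⟨c, ⟨(.inl u, u), rfl⟩, .walk h, T.isMorphism_saturate h⟩
    · exact ⟨none, ⟨(.inl t', t'), rfl⟩, .answer ht, .refl⟩
  · rintro _ hv c _ (h | h | h) ⟨⟨_, t⟩, ht⟩ rfl
    · obtain rfl : t = _ := ht
      exact ⟨⟨(.inl _, _), rfl⟩, rfl, .walk h, T.isMorphism_saturate h⟩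
    · obtain rfl : t = _ := ht
      exact ⟨⟨(.inr _, t), h⟩, rfl, .challenge h, .refl⟩
    · exact absurd ⟨_, rfl⟩ hv

theorem gameValue_choiceGame_le {X : Type v} [CompleteLinearOrder X] (hT : T.NoSinks)
    (val : (ℕ → C) → X) (t₀ : V) :
    gameValue (choiceGame T) (choiceEve V) (.inl t₀) (epsExtension val) ≤
      T.valueAt (epsExtension val) t₀ := by
  have isMorphism_standing : (returnStrategy T).IsMorphism T.saturate fun s => s.1.2 :=
    fun _ _ _ h => h.2
  calc gameValue (choiceGame T) (choiceEve V) (.inl t₀) (epsExtension val)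
    _ ≤ (returnStrategy T).valueAt (epsExtension val) ⟨(.inl t₀, t₀), rfl⟩ :=
      sInf_le ⟨_, _, _, _, isStrategy_returnStrategy hT t₀, rfl⟩
    _ ≤ T.saturate.valueAt (epsExtension val) t₀ := isMorphism_standing.valueAt_le _ _
    _ = T.valueAt (epsExtension val) t₀ := T.valueAt_saturate hT val t₀

end ChoiceGame

section Strategy

variable {C V M : Type u} {D : Set ((V ⊕ Challenge V) × M)}

/-- The states of a product strategy in the choice game which lie over vertices of the tree. -/
def treeStates (D : Set ((V ⊕ Challenge V) × M)) : Set (V × M) := {p | (.inl p.1, p.2) ∈ D}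

/-- The inclusion of the states over the tree into all states. -/
def treeInclusion (D : Set ((V ⊕ Challenge V) × M)) (p : treeStates D) : D :=
  ⟨(.inl p.1.1, p.1.2), p.2⟩

theorem exists_treeInclusion_eq {s : D} {t : V} (hs : s.1.1 = .inl t) :
    ∃ p : treeStates D, p.1.1 = t ∧ treeInclusion D p = s := by
  obtain ⟨⟨_, m⟩, hsD⟩ := s
  obtain rfl : _ = Sum.inl t := hs
  exact ⟨⟨(t, m), hsD⟩, rfl, rfl⟩

namespace IsEpsStrategy

variable {T : Pregraph (Option C) V} {t₀ : V} {S : Pregraph (Option C) D} {s₀ : D}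

theorem exists_edge_of_challenge
    (hS : IsEpsStrategy (choiceGame T) (choiceEve V) (.inl t₀) D S s₀) {A : Challenge V}
    {p : treeStates D} (hp : p.1.1 ∈ A.1) :
    ∃ h : (.inr A, p.1.2) ∈ D, S.Edge (treeInclusion D p) none ⟨(.inr A, p.1.2), h⟩ := by
  obtain ⟨⟨-, -, -, hAdam⟩, hmem⟩ := hS
  obtain ⟨⟨⟨_, m⟩, hD⟩, rfl, hedge⟩ := hAdam _ (inl_notMem_choiceEve p.1.1) none (.inr A)
    (.challenge hp) (treeInclusion D p) rfl
  obtain rfl : p.1.2 = m := hmem _ _ hedge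
  exact ⟨hD, hedge⟩

theorem exists_answer
    (hS : IsEpsStrategy (choiceGame T) (choiceEve V) (.inl t₀) D S s₀) {A : Challenge V} {m : M}
    (h : (.inr A, m) ∈ D) :
    ∃ p : treeStates D, p.1.1 ∈ A.1 ∧ p.1.2 = m ∧
      S.Edge ⟨(.inr A, m), h⟩ none (treeInclusion D p) := by
  obtain ⟨⟨hnoSinks, hmorphism, -, -⟩, hmem⟩ := hS
  obtain ⟨c, s, hedge⟩ := hnoSinks ⟨_, h⟩
  obtain ⟨t, ht, hs, rfl⟩ : ∃ t ∈ A.1, s.1.1 = .inl t ∧ c = none := by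
    have hmove : ChoiceEdge T (.inr A) c s.1.1 := hmorphism hedge
    generalize s.1.1 = v at hmove
    cases hmove with
    | answer ht => exact ⟨_, ht, rfl, rfl⟩
  obtain ⟨p, rfl, rfl⟩ := exists_treeInclusion_eq hs
  exact ⟨p, ht, (hmem _ _ hedge).symm, hedge⟩

theorem isEpsPreseparated_treeStates
    (hS : IsEpsStrategy (choiceGame T) (choiceEve V) (.inl t₀) D S s₀) :
    IsEpsPreseparated (S.saturate.comap (treeInclusion D)) fun p => p.1.2 where
  mono _ _ _ _ _ := S.saturate_edge_mono
  sameFiber _ _ := S.part_eq_of_saturate_edge_none (part := fun s => s.1.2) hS.2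
  exists_least m A hA hm := by
    let B : Challenge V := ⟨(fun p => p.1.1) '' A, hA.image _⟩
    have challenge (p : treeStates D) (hp : p ∈ A) :
        ∃ h : (.inr B, m) ∈ D, S.Edge (treeInclusion D p) none ⟨(.inr B, m), h⟩ := by
      obtain rfl := hm p hp
      exact hS.exists_edge_of_challenge ⟨p, hp, rfl⟩
    obtain ⟨a, ha⟩ := hA
    obtain ⟨hBm, -⟩ := challenge a ha
    obtain ⟨q, ⟨p, hp, hpq⟩, hqm, hanswer⟩ := hS.exists_answer hBm
    obtain rfl : p = q := Subtype.ext (Prod.ext hpq ((hm p hp).trans hqm.symm))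
    exact ⟨p, hp, fun p' hp' => .tail (.single (challenge p' hp').2) hanswer⟩

theorem exists_isMorphism_treeStates
    (hS : IsEpsStrategy (choiceGame T) (choiceEve V) (.inl t₀) D S s₀) (hT : T.IsPretree t₀) :
    ∃ ψ : V → treeStates D, treeInclusion D (ψ t₀) = s₀ ∧
      T.IsMorphism (S.comap (treeInclusion D)) ψ := by
  obtain ⟨⟨-, -, hroot, hAdam⟩, -⟩ := hS
  obtain ⟨p₀, hp₀, rfl⟩ := exists_treeInclusion_eq hroot
  obtain ⟨ψ, rfl, -, hψ⟩ := hT.exists_section (S := S.comap (treeInclusion D))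
    (fun p => p.1.1) hp₀ fun p c t' h => by
      obtain ⟨s', hs', hedge⟩ := hAdam _ (inl_notMem_choiceEve p.1.1) c (.inl t') (.walk h)
        (treeInclusion D p) rfl
      obtain ⟨p', hp', rfl⟩ := exists_treeInclusion_eq hs'
      exact ⟨p', hp', hedge⟩
  exact ⟨ψ, rfl, hψ⟩

theorem exists_structuration {X : Type v} [CompleteLinearOrder X]
    (hS : IsEpsStrategy (choiceGame T) (choiceEve V) (.inl t₀) D S s₀) (hT : T.IsPretree t₀)
    (val : (ℕ → C) → X) :
    ∃ (VU : Type u) (U : Pregraph (Option C) VU) (part : VU → M),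
      IsEpsSeparated U part ∧ EpsWellFounded U ∧ (IsChromaticStrat D S → IsChromaticGraph U part) ∧
      ∃ φ : V → VU, T.IsMorphism U φ ∧
        U.valueAt (epsExtension val) (φ t₀) ≤ S.valueAt (epsExtension val) s₀ := by
  have hpre := hS.isEpsPreseparated_treeStates
  obtain ⟨ψ, hψ₀, hψ⟩ := hS.exists_isMorphism_treeStates hT
  refine ⟨_, hpre.collapse, _, (hpre.comap Quotient.out).isEpsSeparated hpre.collapse_antisymm,
    (hpre.comap Quotient.out).epsWellFounded hpre.collapse_antisymm, ?_, Quotient.mk _ ∘ ψ,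
    hpre.isMorphism_mk.comp fun _ _ _ h => S.isMorphism_saturate (hψ h), ?_⟩
  · rintro ⟨δ, hδ⟩
    have hchrom : IsChromaticGraph S fun s => s.1.2 :=
      ⟨fun m c => δ m (some c), fun s c s' => hδ s s' (some c)⟩
    exact ((hchrom.saturate hS.2).comap (treeInclusion D)).comap Quotient.out
  · calc hpre.collapse.valueAt (epsExtension val) (Quotient.mk _ (ψ t₀))
      _ ≤ (S.saturate.comap (treeInclusion D)).valueAt (epsExtension val) (ψ t₀) :=
        hpre.valueAt_collapse_mk_le _ _
      _ ≤ S.saturate.valueAt (epsExtension val) (treeInclusion D (ψ t₀)) :=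
        (S.saturate.isMorphism_comap _).valueAt_le _ _
      _ = S.valueAt (epsExtension val) s₀ := by rw [hψ₀, S.valueAt_saturate hS.1.1]

end IsEpsStrategy

end Strategy

/-- Structuration of `Cᵋ`-trees. If `val` has ε-memory ≤ μ, then every
`Cᵋ`-tree maps, by a morphism preserving the value at the root, into an ε-separated
well-monotone graph of breadth ≤ μ; moreover if `val` has ε-chromatic memory ≤ μ then
the graph can be taken chromatic. -/
theorem structuration_of_eps_trees
    {C : Type u} {X : Type v} [CompleteLinearOrder X]
    (val : (ℕ → C) → X) (μ : Cardinal.{u})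
    (VT : Type u) (T : Pregraph (Option C) VT) (t₀ : VT) (hT : T.IsTree t₀) :
    (HasEpsMemLE val μ →
      ∃ (VU : Type u) (M : Type u) (U : Pregraph (Option C) VU) (part : VU → M),
        IsEpsSeparated U part ∧ EpsWellFounded U ∧ #M ≤ μ ∧
        ∃ φ : VT → VU, T.IsMorphism U φ ∧
          U.valueAt (epsExtension val) (φ t₀) ≤ T.valueAt (epsExtension val) t₀)
    ∧
    (HasEpsChromMemLE val μ →
      ∃ (VU : Type u) (M : Type u) (U : Pregraph (Option C) VU) (part : VU → M),
        IsEpsSeparated U part ∧ EpsWellFounded U ∧ IsChromaticGraph U part ∧ #M ≤ μ ∧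
        ∃ φ : VT → VU, T.IsMorphism U φ ∧
          U.valueAt (epsExtension val) (φ t₀) ≤ T.valueAt (epsExtension val) t₀) := by
  have hvalue := gameValue_choiceGame_le hT.1 val t₀
  constructor
  · intro hmem
    obtain ⟨M, D, S, s₀, hM, hS, hSvalue⟩ :=
      hmem _ (choiceGame T) (choiceGame_noSinks hT.1) (choiceEve VT) (.inl t₀)
    obtain ⟨VU, U, part, hsep, hwf, -, φ, hφ, hUvalue⟩ := hS.exists_structuration hT.2 val
    exact ⟨VU, M, U, part, hsep, hwf, hM, φ, hφ, hUvalue.trans (hSvalue.trans hvalue)⟩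
  · intro hmem
    obtain ⟨M, D, S, s₀, hM, hS, hSchrom, hSvalue⟩ :=
      hmem _ (choiceGame T) (choiceGame_noSinks hT.1) (choiceEve VT) (.inl t₀)
    obtain ⟨VU, U, part, hsep, hwf, hchrom, φ, hφ, hUvalue⟩ := hS.exists_structuration hT.2 val
    exact ⟨VU, M, U, part, hsep, hwf, hchrom hSchrom, hM, φ, hφ,
      hUvalue.trans (hSvalue.trans hvalue)⟩
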